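/- The Max rule R^m_{1_{|B_v|>0}} satisfies Splitting Monotonicity: for every budgeting scenario E = (A, V, c, ℓ), every item a that belongs to some winning budget of E under R^m_{1_{|B_v|>0}}, and every scenario E' obtained from E by splitting a into a nonempty set A' of new items, some winning budget of E' under R^m_{1_{|B_v|>0}} contains at least one item of A'. -/

import Mathlib

/-!
Replacing `a` by all of `A'` turns a winning budget `B ∋ a` into the budget
`B.erase a ∪ A'` of the split scenario, with the same cost and no less coverage.
Let `W` be any winning budget of the split scenario. If `W` meets `A'`, it is the required
budget. Otherwise `W` uses only old items other than `a`, so it is feasible in the original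
scenario and covers at least as many voters there; optimality of `B` then shows
that `B.erase a ∪ A'` covers at least as many voters as `W`, so it is winning too.
-/

open Finset

/-- A budget `B` is feasible in scenario `(A, c, ℓ)` if it consists of available items
and its total cost is within the budget limit. -/
def feasible {ι : Type*} (A : Finset ι) (c : ι → ℕ) (ℓ : ℕ) (B : Finset ι) : Prop :=
  B ⊆ A ∧ ∑ a ∈ B, c a ≤ ℓ

/-- Total satisfaction of the voters `V` (with approval sets `appr`) from budget `B`,
under satisfaction function `f`. -/
def totalSat {ι υ : Type*} (V : Finset υ) (appr : υ → Finset ι)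
    (f : Finset ι → Finset ι → ℕ) (B : Finset ι) : ℕ :=
  ∑ v ∈ V, f (appr v) B

/-- `B` is a winning budget under the Max rule `R^m_f`. -/
def winning {ι υ : Type*} (A : Finset ι) (V : Finset υ) (appr : υ → Finset ι)
    (c : ι → ℕ) (ℓ : ℕ) (f : Finset ι → Finset ι → ℕ) (B : Finset ι) : Prop :=
  feasible A c ℓ B ∧
    ∀ B' : Finset ι, feasible A c ℓ B' → totalSat V appr f B' ≤ totalSat V appr f B

/-- Cardinality satisfaction: `f(A_v, B) = |A_v ∩ B|`. -/
def fCard {ι : Type*} [DecidableEq ι] : Finset ι → Finset ι → ℕ :=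
  fun Av B => (Av ∩ B).card

/-- Cost satisfaction: `f(A_v, B) = c(A_v ∩ B)`. -/
def fCost {ι : Type*} [DecidableEq ι] (c : ι → ℕ) : Finset ι → Finset ι → ℕ :=
  fun Av B => ∑ a ∈ Av ∩ B, c a

/-- Coverage satisfaction: `f(A_v, B) = 1` if `A_v ∩ B ≠ ∅`, else `0`. -/
def fCover {ι : Type*} [DecidableEq ι] : Finset ι → Finset ι → ℕ :=
  fun Av B => if (Av ∩ B).Nonempty then 1 else 0

/-- A winning budget exists, since there are finitely many feasible budgets and the
empty one is among them. -/
lemma exists_winning {ι υ : Type*} (A : Finset ι) (V : Finset υ)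
    (appr : υ → Finset ι) (c : ι → ℕ) (ℓ : ℕ) (f : Finset ι → Finset ι → ℕ) :
    ∃ B, winning A V appr c ℓ f B := by
  classical
  obtain ⟨B, hB, hmax⟩ := Finset.exists_max_image
    (A.powerset.filter (fun B => ∑ a ∈ B, c a ≤ ℓ)) (totalSat V appr f) ⟨∅, by simp⟩
  simp only [mem_filter, mem_powerset] at hB hmax
  exact ⟨B, hB, hmax⟩

lemma totalSat_fCover_mono {ι υ : Type*} [DecidableEq ι] (V : Finset υ)
    (appr₁ appr₂ : υ → Finset ι) (B₁ B₂ : Finset ι)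
    (h : ∀ v ∈ V, (appr₁ v ∩ B₁).Nonempty → (appr₂ v ∩ B₂).Nonempty) :
    totalSat V appr₁ fCover B₁ ≤ totalSat V appr₂ fCover B₂ := by
  refine Finset.sum_le_sum fun v hv => ?_
  have hv' := h v hv
  unfold fCover
  split_ifs <;> simp_all

/-- `R^m_{1_{|B_v|>0}}` satisfies Splitting Monotonicity: if item `a` belongs to
some winning budget and `a` is split into a nonempty set `A'` of new items (total cost
`c a`, approved exactly by the voters who approved `a`), then some winning budget of
the new scenario contains at least one item of `A'`. -/
theorem cover_maxRule_splittingMonotone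
    {ι υ : Type*} [DecidableEq ι]
    (A : Finset ι) (V : Finset υ) (appr : υ → Finset ι) (c : ι → ℕ) (ℓ : ℕ)
    (happr : ∀ v ∈ V, appr v ⊆ A)
    (a : ι) (ha : a ∈ A)
    (A' : Finset ι) (hA'ne : A'.Nonempty) (hdisj : Disjoint A' (A.erase a))
    (c' : ι → ℕ) (hc'old : ∀ x ∈ A.erase a, c' x = c x) (hc'sum : ∑ x ∈ A', c' x = c a)
    (appr' : υ → Finset ι)
    (happr'yes : ∀ v, a ∈ appr v → appr' v = (appr v).erase a ∪ A')
    (happr'no : ∀ v, a ∉ appr v → appr' v = appr v)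
    (hwinE : ∃ B : Finset ι, winning A V appr c ℓ fCover B ∧ a ∈ B) :
    ∃ B' : Finset ι,
      winning (A.erase a ∪ A') V appr' c' ℓ fCover B' ∧ (B' ∩ A').Nonempty := by
  obtain ⟨B, ⟨⟨hBA, hBcost⟩, hBmax⟩, haB⟩ := hwinE
  obtain ⟨W, ⟨hWA, hWcost⟩, hWmax⟩ := exists_winning (A.erase a ∪ A') V appr' c' ℓ fCover
  by_cases hW : (W ∩ A').Nonempty
  · exact ⟨W, ⟨⟨hWA, hWcost⟩, hWmax⟩, hW⟩
  have hWA' : ∀ x ∈ W, x ∉ A' := fun x hx hx' => hW ⟨x, mem_inter.2 ⟨hx, hx'⟩⟩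
  have hWold : W ⊆ A.erase a := fun x hx =>
    (mem_union.1 (hWA hx)).resolve_right (hWA' x hx)
  have hBold : B.erase a ⊆ A.erase a := erase_subset_erase a hBA
  have hWfeas : feasible A c ℓ W := by
    refine ⟨hWold.trans (erase_subset a A), ?_⟩
    rwa [← Finset.sum_congr rfl fun x hx => hc'old x (hWold hx)]
  have hfeas : feasible (A.erase a ∪ A') c' ℓ (B.erase a ∪ A') := by
    refine ⟨union_subset_union_left hBold, ?_⟩
    rw [sum_union (hdisj.symm.mono_left hBold), hc'sum,
      Finset.sum_congr rfl fun x hx => hc'old x (hBold hx), sum_erase_add _ _ haB]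
    exact hBcost
  have hsatW : totalSat V appr' fCover W ≤ totalSat V appr fCover W := by
    refine totalSat_fCover_mono V _ _ _ _ fun v _ ⟨x, hx⟩ => ⟨x, ?_⟩
    obtain ⟨hxv, hxW⟩ := mem_inter.1 hx
    refine mem_inter.2 ⟨?_, hxW⟩
    by_cases hav : a ∈ appr v
    · rw [happr'yes v hav] at hxv
      exact mem_of_mem_erase ((mem_union.1 hxv).resolve_right (hWA' x hxW))
    · rwa [happr'no v hav] at hxv
  have hsatB : totalSat V appr fCover B ≤ totalSat V appr' fCover (B.erase a ∪ A') := by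
    refine totalSat_fCover_mono V _ _ _ _ fun v _ ⟨x, hx⟩ => ?_
    obtain ⟨hxv, hxB⟩ := mem_inter.1 hx
    by_cases hav : a ∈ appr v
    · rw [happr'yes v hav]
      exact hA'ne.mono (subset_inter subset_union_right subset_union_right)
    · rw [happr'no v hav]
      have hxa : x ≠ a := fun h => hav (h ▸ hxv)
      exact ⟨x, mem_inter.2 ⟨hxv, mem_union_left _ (mem_erase.2 ⟨hxa, hxB⟩)⟩⟩
  refine ⟨B.erase a ∪ A', ⟨hfeas, fun C hC => ?_⟩,
    hA'ne.mono (subset_inter subset_union_right subset_rfl)⟩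
  exact (hWmax C hC).trans (hsatW.trans ((hBmax W hWfeas).trans hsatB))
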